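/- arXiv:1812.08259 — 3 statements merged into one kernel-verified Lean document; each statement's English description precedes it below -/
import Mathlib

section
/- Let G = (V,E) be a finite directed acyclic graph with source s ∈ V and target t ∈ V, and let p ∈ (0,1). For every node v ∈ V, the intermediacy of v factorizes as φ_v(p) = Pr(X_{sv} = 1) · Pr(X_{vt} = 1), i.e. the probability that the random active edge set contains all edges of some directed s–t path through v equals the product of the probability that it contains all edges of some directed path from s to v and the probability that it contains all edges of some directed path from v to t. -/
open scoped Classical

/-- `PathIn F a b l` means `l` is the list of edges of a directed walk from `a` to `b`
all of whose edges belong to the edge set `F`.  (In a directed acyclic graph every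
walk is a path.) -/
inductive PathIn {V : Type*} (F : Finset (V × V)) : V → V → List (V × V) → Prop
  | nil (a : V) : PathIn F a a []
  | cons {a b c : V} {l : List (V × V)} (hab : (a, b) ∈ F) (h : PathIn F b c l) :
      PathIn F a c ((a, b) :: l)

/-- The directed graph with edge set `E` is acyclic: the only directed path from a
node to itself is the empty one. -/
def Acyclic {V : Type*} (E : Finset (V × V)) : Prop :=
  ∀ (a : V) (l : List (V × V)), PathIn E a a l → l = []

/-- There exists a directed path from `a` to `b` with all edges in `E`. -/
def Reaches {V : Type*} (E : Finset (V × V)) (a b : V) : Prop :=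
  ∃ l, PathIn E a b l

/-- `l` is a directed path from `s` to `t` in `E` passing through `v`. -/
def ThroughPath {V : Type*} (E : Finset (V × V)) (s t v : V) (l : List (V × V)) : Prop :=
  PathIn E s t l ∧ (v = s ∨ v ∈ l.map Prod.snd)

/-- Some directed `s`–`t` path through `v` (in the graph with edge set `E`) has all
its edges in `S`. -/
def ActiveThrough {V : Type*} (E S : Finset (V × V)) (s t v : V) : Prop :=
  ∃ l, ThroughPath E s t v l ∧ ∀ e ∈ l, e ∈ S

/-- The intermediacy `φ_v(p)`: the probability that a random edge subset `S ⊆ E`,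
drawn with probability `p^|S| (1-p)^(|E|-|S|)`, contains all edges of some directed
`s`–`t` path through `v`. -/
noncomputable def intermediacy {V : Type*} [DecidableEq V] (E : Finset (V × V)) (p : ℝ)
    (s t v : V) : ℝ :=
  ∑ S ∈ E.powerset, p ^ S.card * (1 - p) ^ (E.card - S.card) *
    (if ActiveThrough E S s t v then 1 else 0)

/-- `Pr(X_{ab} = 1)`: the probability that a random edge subset `S ⊆ E` contains all
edges of some directed path from `a` to `b`. -/
noncomputable def prReach {V : Type*} [DecidableEq V] (E : Finset (V × V)) (p : ℝ)
    (a b : V) : ℝ :=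
  ∑ S ∈ E.powerset, p ^ S.card * (1 - p) ^ (E.card - S.card) *
    (if ∃ l, PathIn E a b l ∧ ∀ e ∈ l, e ∈ S then 1 else 0)

/-- `ℓ_v`: the length of a shortest directed `s`–`t` path passing through `v`. -/
noncomputable def shortestThrough {V : Type*} (E : Finset (V × V)) (s t v : V) : ℕ :=
  sInf {n | ∃ l, ThroughPath E s t v l ∧ l.length = n}

/-- `σ_v`: the maximum number of pairwise edge-disjoint directed `s`–`t` paths all
passing through `v`. -/
noncomputable def maxDisjointThrough {V : Type*} (E : Finset (V × V)) (s t v : V) : ℕ :=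
  sSup {n | ∃ P : Finset (List (V × V)), P.card = n ∧ (∀ l ∈ P, ThroughPath E s t v l) ∧
    ∀ l₁ ∈ P, ∀ l₂ ∈ P, l₁ ≠ l₂ → ∀ e, e ∈ l₁ → e ∉ l₂}

/-!
A directed walk from `s` to `t` visits `v` exactly when it is a walk from `s` to `v` followed by one
from `v` to `t`, so the event measured by `φ_v(p)` is the conjunction of the two reachability
events. The first depends only on the edges whose head reaches `v`, the second only on the edges
whose tail is reachable from `v`. An edge of both kinds would close a cycle through `v`; hence the
two events depend on disjoint sets of edges and are independent.
-/

section RandomSubset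

variable {α β R : Type*} [CommRing R]

/-- The probability that a random subset of `E`, containing each element independently with
probability `p`, equals `S`; meaningful for `S ⊆ E` only. -/
def bernoulliWeight (p : R) (E S : Finset α) : R :=
  p ^ S.card * (1 - p) ^ (E.card - S.card)

/-- The expectation of `f` at a random subset of `E` containing each element independently with
probability `p`. It is polynomial in `p`, hence defined over any commutative ring. -/
def bernoulliExpect (p : R) (E : Finset α) (f : Finset α → R) : R :=
  ∑ S ∈ E.powerset, bernoulliWeight p E S * f S

/-- `f S` depends only on which elements of `A` belong to `S`. -/
def DeterminedBy [DecidableEq α] (f : Finset α → β) (A : Finset α) : Prop :=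
  ∀ S, f (S ∩ A) = f S

theorem sum_bernoulliWeight (p : R) (E : Finset α) :
    ∑ S ∈ E.powerset, bernoulliWeight p E S = 1 := by
  simp [bernoulliWeight, Finset.sum_pow_mul_eq_add_pow]

theorem bernoulliExpect_const (p : R) (E : Finset α) (c : R) :
    bernoulliExpect p E (fun _ ↦ c) = c := by
  rw [bernoulliExpect, ← Finset.sum_mul, sum_bernoulliWeight, one_mul]

theorem bernoulliExpect_mul_const (p : R) (E : Finset α) (f : Finset α → R) (c : R) :
    bernoulliExpect p E (fun S ↦ f S * c) = bernoulliExpect p E f * c := by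
  simp only [bernoulliExpect, Finset.sum_mul, mul_assoc]

theorem bernoulliExpect_const_mul (p : R) (E : Finset α) (c : R) (f : Finset α → R) :
    bernoulliExpect p E (fun S ↦ c * f S) = c * bernoulliExpect p E f := by
  simp only [bernoulliExpect, Finset.mul_sum, mul_left_comm]

theorem bernoulliExpect_congr {p : R} {E : Finset α} {f g : Finset α → R}
    (h : ∀ S ⊆ E, f S = g S) : bernoulliExpect p E f = bernoulliExpect p E g :=
  Finset.sum_congr rfl fun S hS ↦ by rw [h S (Finset.mem_powerset.1 hS)]

variable [DecidableEq α]

theorem sum_powerset_union {M : Type*} [AddCommMonoid M] {A B : Finset α}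
    (hAB : Disjoint A B) (f : Finset α → M) :
    ∑ S ∈ (A ∪ B).powerset, f S = ∑ T ∈ A.powerset, ∑ U ∈ B.powerset, f (T ∪ U) := by
  rw [← Finset.sum_product']
  symm
  refine Finset.sum_nbij' (fun q ↦ q.1 ∪ q.2) (fun S ↦ (S ∩ A, S ∩ B)) ?_ ?_ ?_ ?_ fun _ _ ↦ rfl
  · rintro ⟨T, U⟩ h
    obtain ⟨hT, hU⟩ : T ⊆ A ∧ U ⊆ B := by simpa using h
    exact Finset.mem_powerset.2 (Finset.union_subset_union hT hU)
  · simp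
  · rintro ⟨T, U⟩ h
    obtain ⟨hT, hU⟩ : T ⊆ A ∧ U ⊆ B := by simpa using h
    have hUA : U ∩ A = ∅ := Finset.disjoint_iff_inter_eq_empty.1 (hAB.symm.mono_left hU)
    have hTB : T ∩ B = ∅ := Finset.disjoint_iff_inter_eq_empty.1 (hAB.mono_left hT)
    simp [Finset.union_inter_distrib_right, hUA, hTB, Finset.inter_eq_left.2 hT,
      Finset.inter_eq_left.2 hU]
  · intro S hS
    rw [← Finset.inter_union_distrib_left, Finset.inter_eq_left.2 (Finset.mem_powerset.1 hS)]

theorem bernoulliWeight_union (p : R) {A B T U : Finset α} (hAB : Disjoint A B) (hT : T ⊆ A)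
    (hU : U ⊆ B) :
    bernoulliWeight p (A ∪ B) (T ∪ U) = bernoulliWeight p A T * bernoulliWeight p B U := by
  have hcard : (A ∪ B).card - (T ∪ U).card = (A.card - T.card) + (B.card - U.card) := by
    rw [Finset.card_union_of_disjoint hAB, Finset.card_union_of_disjoint (hAB.mono hT hU)]
    have := Finset.card_le_card hT
    have := Finset.card_le_card hU
    omega
  rw [bernoulliWeight, hcard, Finset.card_union_of_disjoint (hAB.mono hT hU), pow_add, pow_add,
    bernoulliWeight, bernoulliWeight]
  ring

theorem bernoulliExpect_union (p : R) {A B : Finset α} (hAB : Disjoint A B) (f : Finset α → R) :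
    bernoulliExpect p (A ∪ B) f =
      bernoulliExpect p A fun T ↦ bernoulliExpect p B fun U ↦ f (T ∪ U) := by
  simp only [bernoulliExpect, sum_powerset_union hAB, Finset.mul_sum]
  refine Finset.sum_congr rfl fun T hT ↦ Finset.sum_congr rfl fun U hU ↦ ?_
  rw [bernoulliWeight_union p hAB (Finset.mem_powerset.1 hT) (Finset.mem_powerset.1 hU), mul_assoc]

theorem DeterminedBy.union_eq_left {f : Finset α → β} {A : Finset α} (hf : DeterminedBy f A)
    (T : Finset α) {U : Finset α} (hU : Disjoint U A) : f (T ∪ U) = f T := by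
  rw [← hf (T ∪ U), Finset.union_inter_distrib_right,
    Finset.disjoint_iff_inter_eq_empty.1 hU, Finset.union_empty, hf]

theorem bernoulliExpect_union_mul (p : R) {A B : Finset α} (hAB : Disjoint A B)
    {f g : Finset α → R} (hf : ∀ T ⊆ A, ∀ U ⊆ B, f (T ∪ U) = f T)
    (hg : ∀ T ⊆ A, ∀ U ⊆ B, g (T ∪ U) = g U) :
    bernoulliExpect p (A ∪ B) (fun S ↦ f S * g S) =
      bernoulliExpect p A f * bernoulliExpect p B g := by
  rw [bernoulliExpect_union p hAB, ← bernoulliExpect_mul_const]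
  refine bernoulliExpect_congr fun T hT ↦ ?_
  rw [← bernoulliExpect_const_mul]
  exact bernoulliExpect_congr fun U hU ↦ by rw [hf T hT U hU, hg T hT U hU]

theorem bernoulliExpect_mul_of_disjoint (p : R) (E : Finset α) {A B : Finset α} (hAB : Disjoint A B)
    {f g : Finset α → R} (hf : DeterminedBy f A) (hg : DeterminedBy g B) :
    bernoulliExpect p E (fun S ↦ f S * g S) = bernoulliExpect p E f * bernoulliExpect p E g := by
  have hE : E ∩ A ∪ E \ A = E := sup_inf_sdiff E A
  have hdisj : Disjoint (E ∩ A) (E \ A) := disjoint_inf_sdiff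
  have hf' : ∀ T ⊆ E ∩ A, ∀ U ⊆ E \ A, f (T ∪ U) = f T := fun T _ U hU ↦
    hf.union_eq_left T (Finset.sdiff_disjoint.mono_left hU)
  have hg' : ∀ T ⊆ E ∩ A, ∀ U ⊆ E \ A, g (T ∪ U) = g U := fun T hT U _ ↦ by
    rw [Finset.union_comm]
    exact hg.union_eq_left U (hAB.mono_left (hT.trans Finset.inter_subset_right))
  have joint := bernoulliExpect_union_mul p hdisj hf' hg'
  have left := bernoulliExpect_union_mul p hdisj (g := fun _ ↦ 1) hf' fun _ _ _ _ ↦ rfl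
  have right := bernoulliExpect_union_mul p hdisj (f := fun _ ↦ 1) (fun _ _ _ _ ↦ rfl) hg'
  simp only [hE, mul_one, one_mul, bernoulliExpect_const] at joint left right
  rw [joint, left, right]

end RandomSubset

section Walks

variable {V : Type*} {E F S : Finset (V × V)} {a b c s t v : V} {e : V × V} {l m : List (V × V)}

theorem pathIn_nil_iff : PathIn F a b [] ↔ a = b :=
  ⟨fun | .nil _ => rfl, fun h ↦ h ▸ .nil a⟩

theorem pathIn_cons_iff : PathIn F a b (e :: l) ↔ e.1 = a ∧ e ∈ F ∧ PathIn F e.2 b l :=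
  ⟨fun | .cons he h => ⟨rfl, he, h⟩, by rintro ⟨rfl, he, h⟩; exact .cons he h⟩

theorem pathIn_append_iff :
    PathIn F a c (l ++ m) ↔ ∃ b, PathIn F a b l ∧ PathIn F b c m := by
  induction l generalizing a with
  | nil => simp [pathIn_nil_iff]
  | cons e l ih => simp [pathIn_cons_iff, ih, and_assoc]

theorem PathIn.exists_append_cons_of_mem (h : PathIn F a b l) (he : e ∈ l) :
    ∃ l₁ l₂, l = l₁ ++ e :: l₂ ∧ PathIn F a e.1 l₁ ∧ e ∈ F ∧ PathIn F e.2 b l₂ := by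
  obtain ⟨l₁, l₂, rfl⟩ := List.append_of_mem he
  obtain ⟨x, h₁, h₂⟩ := pathIn_append_iff.1 h
  obtain ⟨rfl, heF, h₂⟩ := pathIn_cons_iff.1 h₂
  exact ⟨l₁, l₂, rfl, h₁, heF, h₂⟩

theorem PathIn.end_eq_or_mem (h : PathIn F a b l) : b = a ∨ b ∈ l.map Prod.snd := by
  induction h with
  | nil => exact .inl rfl
  | cons _ _ ih => exact .inr (by simpa only [List.map_cons, List.mem_cons] using ih)

theorem throughPath_iff :
    ThroughPath E s t v l ↔ ∃ l₁ l₂, l = l₁ ++ l₂ ∧ PathIn E s v l₁ ∧ PathIn E v t l₂ := by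
  constructor
  · rintro ⟨h, rfl | hv⟩
    · exact ⟨[], l, rfl, .nil v, h⟩
    · obtain ⟨e, he, rfl⟩ := List.mem_map.1 hv
      obtain ⟨l₁, l₂, rfl, h₁, heE, h₂⟩ := h.exists_append_cons_of_mem he
      exact ⟨l₁ ++ [e], l₂, by simp, pathIn_append_iff.2 ⟨e.1, h₁, .cons heE (.nil e.2)⟩, h₂⟩
  · rintro ⟨l₁, l₂, rfl, h₁, h₂⟩
    refine ⟨pathIn_append_iff.2 ⟨v, h₁, h₂⟩, h₁.end_eq_or_mem.imp_right fun hv ↦ ?_⟩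
    rw [List.map_append]
    exact List.mem_append_left _ hv

/-- The event `X_{ab} = 1`: all edges of some directed walk from `a` to `b` in the graph with edge
set `E` lie in `S`. -/
def ActiveReaches (E S : Finset (V × V)) (a b : V) : Prop :=
  ∃ l, PathIn E a b l ∧ ∀ e ∈ l, e ∈ S

theorem activeThrough_iff :
    ActiveThrough E S s t v ↔ ActiveReaches E S s v ∧ ActiveReaches E S v t := by
  simp only [ActiveThrough, throughPath_iff]
  constructor
  · rintro ⟨_, ⟨l₁, l₂, rfl, h₁, h₂⟩, hS⟩
    obtain ⟨hS₁, hS₂⟩ := List.forall_mem_append.1 hS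
    exact ⟨⟨l₁, h₁, hS₁⟩, ⟨l₂, h₂, hS₂⟩⟩
  · rintro ⟨⟨l₁, h₁, hS₁⟩, ⟨l₂, h₂, hS₂⟩⟩
    exact ⟨l₁ ++ l₂, ⟨l₁, l₂, rfl, h₁, h₂⟩, List.forall_mem_append.2 ⟨hS₁, hS₂⟩⟩

theorem determinedBy_activeReaches [DecidableEq V] {A : Finset (V × V)}
    (hA : ∀ l, PathIn E a b l → ∀ e ∈ l, e ∈ A) :
    DeterminedBy (fun S ↦ ActiveReaches E S a b) A := fun S ↦ propext <|
  exists_congr fun l ↦ and_congr_right fun h ↦ forall₂_congr fun e he ↦ by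
    simp [hA l h e he]

/-- The edges whose head reaches `v`: those a walk ending at `v` can use. -/
noncomputable def upstreamEdges (E : Finset (V × V)) (v : V) : Finset (V × V) :=
  {e ∈ E | Reaches E e.2 v}

/-- The edges whose tail is reachable from `v`: those a walk starting at `v` can use. -/
noncomputable def downstreamEdges (E : Finset (V × V)) (v : V) : Finset (V × V) :=
  {e ∈ E | Reaches E v e.1}

theorem PathIn.mem_upstreamEdges (h : PathIn E s v l) (he : e ∈ l) : e ∈ upstreamEdges E v := by
  obtain ⟨_, l₂, _, _, heE, h₂⟩ := h.exists_append_cons_of_mem he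
  exact Finset.mem_filter.2 ⟨heE, l₂, h₂⟩

theorem PathIn.mem_downstreamEdges (h : PathIn E v t l) (he : e ∈ l) :
    e ∈ downstreamEdges E v := by
  obtain ⟨l₁, _, _, h₁, heE, _⟩ := h.exists_append_cons_of_mem he
  exact Finset.mem_filter.2 ⟨heE, l₁, h₁⟩

theorem disjoint_upstreamEdges_downstreamEdges (hv : ∀ l, PathIn E v v l → l = []) :
    Disjoint (upstreamEdges E v) (downstreamEdges E v) := by
  refine Finset.disjoint_left.2 fun e hup hdown ↦ ?_
  obtain ⟨heE, m, hm⟩ := Finset.mem_filter.1 hup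
  obtain ⟨-, l, hl⟩ := Finset.mem_filter.1 hdown
  have hcycle : PathIn E v v (l ++ e :: m) := pathIn_append_iff.2 ⟨e.1, hl, .cons heE hm⟩
  simpa using hv _ hcycle

end Walks

theorem intermediacy_factorization_general {V : Type*} [DecidableEq V] (E : Finset (V × V))
    (s t : V) (p : ℝ) (v : V) (hv : ∀ l, PathIn E v v l → l = []) :
    intermediacy E p s t v = prReach E p s v * prReach E p v t := by
  let indicator (P : Prop) : ℝ := if P then 1 else 0
  have hup : DeterminedBy (fun S ↦ ActiveReaches E S s v) (upstreamEdges E v) :=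
    determinedBy_activeReaches fun _ h _ ↦ h.mem_upstreamEdges
  have hdown : DeterminedBy (fun S ↦ ActiveReaches E S v t) (downstreamEdges E v) :=
    determinedBy_activeReaches fun _ h _ ↦ h.mem_downstreamEdges
  calc intermediacy E p s t v
    _ = bernoulliExpect p E fun S ↦
          indicator (ActiveReaches E S s v) * indicator (ActiveReaches E S v t) := by
      simp only [intermediacy, bernoulliExpect, bernoulliWeight, indicator, activeThrough_iff,
        ite_zero_mul_ite_zero, mul_one]
    _ = bernoulliExpect p E (fun S ↦ indicator (ActiveReaches E S s v)) *
          bernoulliExpect p E (fun S ↦ indicator (ActiveReaches E S v t)) :=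
      bernoulliExpect_mul_of_disjoint p E (disjoint_upstreamEdges_downstreamEdges hv)
        (fun S ↦ congrArg indicator (hup S)) (fun S ↦ congrArg indicator (hdown S))
    _ = prReach E p s v * prReach E p v t := rfl

/-- In a finite directed acyclic graph with source `s` and target `t`,
for `p ∈ (0,1)` the intermediacy of every node `v` factorizes as
`φ_v(p) = Pr(X_{sv} = 1) · Pr(X_{vt} = 1)`. -/
theorem intermediacy_factorization {V : Type*} [Fintype V] [DecidableEq V]
    (E : Finset (V × V)) (hacyc : Acyclic E) (s t : V)
    (p : ℝ) (hp : p ∈ Set.Ioo (0 : ℝ) 1) (v : V) :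
    intermediacy E p s t v = prReach E p s v * prReach E p v t :=
  intermediacy_factorization_general E s t p v (hacyc v)
end

section
/- Let G = (V,E) be a finite directed acyclic graph with source s and target t in which every node lies on at least one directed s–t path, and let u, v ∈ V. If ℓ_u < ℓ_v, then there exists ε > 0 such that for all p ∈ (0, ε) the intermediacies satisfy φ_u(p) > φ_v(p). -/
open scoped Classical

/-!
Call an edge subset active for `v` if it contains all edges of some `s`–`t` path through `v`. Each
active `S` contributes `p ^ #S * (1 - p) ^ (#E - #S)` to `φ_v(p)`, so as `p → 0` the smallest ones
dominate: if every active set has at least `k` edges, then `φ_v(p) / p ^ k` tends to the number of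
active sets with exactly `k` edges. Paths in an acyclic graph do not repeat edges, so the smallest
active sets have `ℓ_v` edges. When `ℓ_u < ℓ_v`, dividing by `p ^ ℓ_u` gives a positive limit for `u`
and the limit `0` for `v`.
-/

open Filter Finset Topology

section SubsetProb

variable {α : Type*} {E : Finset α} {A B : Finset α → Prop}

/-- The probability that a random subset of `E`, containing each element independently with
probability `p`, satisfies `A`. As a polynomial it is defined for all real `p`, but it is a
probability only for `0 ≤ p ≤ 1`. -/
noncomputable def subsetProb (E : Finset α) (p : ℝ) (A : Finset α → Prop) : ℝ :=
  ∑ S ∈ E.powerset with A S, p ^ #S * (1 - p) ^ (#E - #S)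

theorem tendsto_pow_mul_one_sub_pow_div_pow {k m : ℕ} (hkm : k ≤ m) (n : ℕ) :
    Tendsto (fun p : ℝ => p ^ m * (1 - p) ^ n / p ^ k) (𝓝[≠] 0) (𝓝 (if m = k then 1 else 0)) := by
  have hcont : Continuous fun p : ℝ => p ^ (m - k) * (1 - p) ^ n := by fun_prop
  have hzero : (0 : ℝ) ^ (m - k) * (1 - 0) ^ n = if m = k then 1 else 0 := by
    simp only [sub_zero, one_pow, mul_one, zero_pow_eq, Nat.sub_eq_zero_iff_le, hkm.ge_iff_eq']
  refine ((hzero ▸ hcont.tendsto 0).mono_left nhdsWithin_le_nhds).congr' ?_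
  filter_upwards [self_mem_nhdsWithin] with p hp
  rw [pow_sub₀ p hp hkm, div_eq_mul_inv, mul_right_comm]

theorem tendsto_subsetProb_div_pow {k : ℕ} (hA : ∀ S ⊆ E, A S → k ≤ #S) :
    Tendsto (fun p => subsetProb E p A / p ^ k) (𝓝[≠] 0)
      (𝓝 #{S ∈ E.powerset | A S ∧ #S = k}) := by
  simp only [subsetProb, sum_div, ← filter_filter, card_filter, Nat.cast_sum, Nat.cast_ite,
    Nat.cast_one, Nat.cast_zero]
  refine tendsto_finsetSum _ fun S hS => ?_
  obtain ⟨hSE, hAS⟩ := mem_filter.1 hS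
  exact tendsto_pow_mul_one_sub_pow_div_pow (hA S (mem_powerset.1 hSE) hAS) _

theorem eventually_subsetProb_lt {S₀ : Finset α} (hS₀ : S₀ ⊆ E) (hA : A S₀)
    (hB : ∀ S ⊆ E, B S → #S₀ < #S) :
    ∀ᶠ p in 𝓝[>] 0, subsetProb E p B < subsetProb E p A := by
  obtain ⟨M, hM, hMmin⟩ := exists_min_image {S ∈ E.powerset | A S} card
    ⟨S₀, mem_filter.2 ⟨mem_powerset.2 hS₀, hA⟩⟩
  simp only [mem_filter, mem_powerset, and_imp] at hM hMmin
  have hBM : ∀ S ⊆ E, B S → #M < #S := fun S hS hBS =>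
    (hMmin S₀ hS₀ hA).trans_lt (hB S hS hBS)
  have hlim_A := tendsto_subsetProb_div_pow hMmin
  have hlim_B := tendsto_subsetProb_div_pow fun S hS hBS => (hBM S hS hBS).le
  have hcount_A : 0 < #{S ∈ E.powerset | A S ∧ #S = #M} :=
    card_pos.2 ⟨M, mem_filter.2 ⟨mem_powerset.2 hM.1, hM.2, rfl⟩⟩
  have hcount_B : #{S ∈ E.powerset | B S ∧ #S = #M} = 0 :=
    card_filter_eq_zero_iff.2 fun S hS hBS => (hBM S (mem_powerset.1 hS) hBS.1).ne' hBS.2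
  have hcount : (#{S ∈ E.powerset | B S ∧ #S = #M} : ℝ) < #{S ∈ E.powerset | A S ∧ #S = #M} := by
    exact_mod_cast hcount_B.trans_lt hcount_A
  filter_upwards [(hlim_B.eventually_lt hlim_A hcount).filter_mono (nhdsGT_le_nhdsNE 0),
    self_mem_nhdsWithin] with p hlt hp
  exact (div_lt_div_iff_of_pos_right (pow_pos hp _)).1 hlt

end SubsetProb

section Paths

variable {V : Type*} {E S : Finset (V × V)} {a b s t v : V} {l : List (V × V)}

theorem PathIn.mem_of_mem (h : PathIn E a b l) {e : V × V} (he : e ∈ l) : e ∈ E := by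
  induction h with
  | nil => cases he
  | cons hab _ ih =>
    rcases List.mem_cons.1 he with rfl | he
    exacts [hab, ih he]

theorem PathIn.reaches_fst (h : PathIn E a b l) {e : V × V} (he : e ∈ l) : Reaches E a e.1 := by
  induction h with
  | nil => cases he
  | cons hab _ ih =>
    rcases List.mem_cons.1 he with rfl | he
    · exact ⟨[], .nil _⟩
    · obtain ⟨l', hl'⟩ := ih he
      exact ⟨_, .cons hab hl'⟩

theorem PathIn.nodup (h : PathIn E a b l) (hE : Acyclic E) : l.Nodup := by
  induction h with
  | nil => exact List.nodup_nil
  | cons hab h ih =>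
    refine List.nodup_cons.2 ⟨fun hmem => ?_, ih⟩
    obtain ⟨l', hl'⟩ := h.reaches_fst hmem
    exact List.cons_ne_nil _ _ (hE _ _ (.cons hab hl'))

theorem shortestThrough_le_card (hE : Acyclic E) (hS : ActiveThrough E S s t v) :
    shortestThrough E s t v ≤ #S := by
  obtain ⟨l, hl, hlS⟩ := hS
  calc shortestThrough E s t v ≤ l.length := Nat.sInf_le ⟨l, hl, rfl⟩
    _ = #l.toFinset := (List.toFinset_card_of_nodup (hl.1.nodup hE)).symm
    _ ≤ #S := card_le_card fun e he => hlS e (List.mem_toFinset.1 he)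

theorem exists_activeThrough_card_le (hv : ∃ l, ThroughPath E s t v l) :
    ∃ S ⊆ E, ActiveThrough E S s t v ∧ #S ≤ shortestThrough E s t v := by
  obtain ⟨l₀, hl₀⟩ := hv
  obtain ⟨l, hl, hlen⟩ : ∃ l, ThroughPath E s t v l ∧ l.length = shortestThrough E s t v :=
    Nat.sInf_mem (s := {n | ∃ l, ThroughPath E s t v l ∧ l.length = n}) ⟨_, l₀, hl₀, rfl⟩
  exact ⟨l.toFinset, fun e he => hl.1.mem_of_mem (List.mem_toFinset.1 he),
    ⟨l, hl, fun e he => List.mem_toFinset.2 he⟩, hlen ▸ l.toFinset_card_le⟩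

theorem intermediacy_eq_subsetProb [DecidableEq V] (E : Finset (V × V)) (p : ℝ) (s t v : V) :
    intermediacy E p s t v = subsetProb E p fun S => ActiveThrough E S s t v := by
  simp only [intermediacy, subsetProb, sum_filter, mul_ite, mul_one, mul_zero]

end Paths

theorem intermediacy_gt_of_shorter_general {V : Type*} [DecidableEq V]
    {E : Finset (V × V)} (hacyc : Acyclic E) {s t u v : V}
    (hu : ∃ l, ThroughPath E s t u l)
    (hlen : shortestThrough E s t u < shortestThrough E s t v) :
    ∃ ε > (0 : ℝ), ∀ p : ℝ, 0 < p → p < ε →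
      intermediacy E p s t v < intermediacy E p s t u := by
  obtain ⟨S₀, hS₀E, hS₀, hcard⟩ := exists_activeThrough_card_le hu
  have hsmaller : ∀ S ⊆ E, ActiveThrough E S s t v → #S₀ < #S := fun S _ hS =>
    hcard.trans_lt (hlen.trans_le (shortestThrough_le_card hacyc hS))
  obtain ⟨ε, hε, hlt⟩ := mem_nhdsGT_iff_exists_Ioo_subset.1
    (eventually_subsetProb_lt (A := fun S => ActiveThrough E S s t u) hS₀E hS₀ hsmaller)
  refine ⟨ε, hε, fun p hp hpε => ?_⟩
  rw [intermediacy_eq_subsetProb, intermediacy_eq_subsetProb]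
  exact hlt ⟨hp, hpε⟩

/-- If every node lies on a directed `s`–`t` path and `ℓ_u < ℓ_v`, then
there is an `ε > 0` such that `φ_u(p) > φ_v(p)` for all `p ∈ (0, ε)`. -/
theorem intermediacy_gt_of_shorter {V : Type*} [Fintype V] [DecidableEq V]
    (E : Finset (V × V)) (hacyc : Acyclic E) (s t : V)
    (hall : ∀ x : V, ∃ l, ThroughPath E s t x l) (u v : V)
    (hlen : shortestThrough E s t u < shortestThrough E s t v) :
    ∃ ε > (0 : ℝ), ∀ p : ℝ, 0 < p → p < ε →
      intermediacy E p s t v < intermediacy E p s t u :=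
  intermediacy_gt_of_shorter_general hacyc (hall u) hlen
end

section
/- For every integer k ≥ 2 there exists a unique p ∈ (0,1) such that p = 1 − (1 − p²)^k; moreover, for p below this value one has p > 1 − (1 − p²)^k, and for p above this value one has p < 1 − (1 − p²)^k. (Here p is the probability that a single direct edge from u to v is active, and 1 − (1 − p²)^k is the probability that at least one of k edge-disjoint length-2 paths from u to v is fully active.) -/
open scoped Classical

/-!
The failure probability of the `k` indirect paths is `(1 - p²)^k`, that of the direct edge is
`1 - p`, and the theorem compares the two. The logarithm of their ratio,
`k log (1 - p²) - log (1 - p) = k log (1 + p) + (k - 1) log (1 - p)`, is strictly concave in `p`.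
It vanishes at `0` with slope `1` there and tends to `-∞` at `1`, so on `(0, 1)` it changes sign
exactly once, from positive to negative.
-/

open Set Filter Topology

section StrictConcave

variable {𝕜 : Type*} [Field 𝕜] [LinearOrder 𝕜] [IsStrictOrderedRing 𝕜]
  {β : Type*} [AddCommMonoid β] [LinearOrder β] [IsOrderedAddMonoid β] [Module 𝕜 β]
  [PosSMulStrictMono 𝕜 β] {s : Set 𝕜} {f : 𝕜 → β} {a c x : 𝕜}

lemma pos_of_strictConcaveOn_of_nonneg (hf : StrictConcaveOn 𝕜 s f) (ha : a ∈ s) (hc : c ∈ s)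
    (hfa : 0 ≤ f a) (hfc : 0 ≤ f c) (hx : x ∈ Ioo a c) : 0 < f x :=
  (le_min hfa hfc).trans_lt <|
    hf.lt_on_openSegment ha hc (hx.1.trans hx.2).ne (Ioo_subset_openSegment hx)

lemma neg_of_strictConcaveOn_of_nonneg_of_nonpos (hf : StrictConcaveOn 𝕜 s f) (ha : a ∈ s)
    (hx : x ∈ s) (hfa : 0 ≤ f a) (hfc : f c ≤ 0) (hc : c ∈ Ioo a x) : f x < 0 := by
  by_contra! hfx
  exact hfc.not_gt (pos_of_strictConcaveOn_of_nonneg hf ha hx hfa hfx hc)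

end StrictConcave

lemma exists_sign_change_of_strictConcaveOn {f : ℝ → ℝ} {a b : ℝ}
    (hf : StrictConcaveOn ℝ (Ico a b) f) (hfa : 0 ≤ f a)
    (hpos : ∃ x ∈ Ioo a b, 0 < f x) (hneg : ∃ y ∈ Ioo a b, f y < 0) :
    ∃ c ∈ Ioo a b, f c = 0 ∧ (∀ x ∈ Ioo a c, 0 < f x) ∧ ∀ x ∈ Ioo c b, f x < 0 := by
  obtain ⟨x, hx, hfx⟩ := hpos
  obtain ⟨y, hy, hfy⟩ := hneg
  have ha : a ∈ Ico a b := left_mem_Ico.2 (hx.1.trans hx.2)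
  have hxy : x ≤ y := by
    by_contra! hyx
    exact hfy.not_gt <|
      pos_of_strictConcaveOn_of_nonneg hf ha (Ioo_subset_Ico_self hx) hfa hfx.le ⟨hy.1, hyx⟩
  have hcont : ContinuousOn f (Ioo a b) :=
    (hf.concaveOn.subset Ioo_subset_Ico_self (convex_Ioo a b)).continuousOn isOpen_Ioo
  obtain ⟨c, hc, hfc⟩ : 0 ∈ f '' Icc x y :=
    intermediate_value_Icc' hxy (hcont.mono (Icc_subset_Ioo hx.1 hy.2)) ⟨hfy.le, hfx.le⟩
  have hcab : c ∈ Ioo a b := Icc_subset_Ioo hx.1 hy.2 hc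
  refine ⟨c, hcab, hfc, fun z hz ↦ ?_, fun z hz ↦ ?_⟩
  · exact pos_of_strictConcaveOn_of_nonneg hf ha (Ioo_subset_Ico_self hcab) hfa hfc.ge hz
  · exact neg_of_strictConcaveOn_of_nonneg_of_nonpos hf ha ⟨(hcab.1.trans hz.1).le, hz.2⟩ hfa
      hfc.le ⟨hcab.1, hz.1⟩

lemma one_sub_sq_pos {R : Type*} [Ring R] [LinearOrder R] [IsStrictOrderedRing R] {x : R}
    (hx : x ∈ Ioo (-1) 1) : 0 < 1 - x ^ 2 :=
  sub_pos.2 ((sq_lt_one_iff_abs_lt_one x).2 (abs_lt.2 hx))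

/-- The logarithm of the ratio `(1 - p²)^k / (1 - p)` of the probabilities that `k` edge-disjoint
paths of length two all fail and that a direct edge fails. It has this meaning for `-1 < p < 1`;
outside that interval it takes the values dictated by `Real.log 0 = 0` and
`Real.log x = Real.log |x|`. -/
noncomputable def logFailureRatio (k p : ℝ) : ℝ :=
  k * Real.log (1 - p ^ 2) - Real.log (1 - p)

namespace logFailureRatio

variable {k p : ℝ}

lemma eq_add_log (k : ℝ) (hp : p ∈ Ioo (-1) 1) :
    logFailureRatio k p = k * Real.log (1 + p) + (k - 1) * Real.log (1 - p) := by
  have h₁ : 1 + p ≠ 0 := by linarith [hp.1]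
  have h₂ : 1 - p ≠ 0 := by linarith [hp.2]
  rw [logFailureRatio, show 1 - p ^ 2 = (1 + p) * (1 - p) by ring, Real.log_mul h₁ h₂]
  ring

lemma apply_zero (k : ℝ) : logFailureRatio k 0 = 0 := by
  simp [logFailureRatio]

lemma pos_iff (hp : p ∈ Ioo (-1) 1) :
    0 < logFailureRatio k p ↔ 1 - (1 - p ^ 2) ^ k < p := by
  rw [logFailureRatio, sub_pos, ← Real.lt_rpow_iff_log_lt (sub_pos.2 hp.2) (one_sub_sq_pos hp),
    sub_lt_comm]

lemma neg_iff (hp : p ∈ Ioo (-1) 1) :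
    logFailureRatio k p < 0 ↔ p < 1 - (1 - p ^ 2) ^ k := by
  rw [logFailureRatio, sub_neg, ← Real.rpow_lt_iff_lt_log (one_sub_sq_pos hp) (sub_pos.2 hp.2),
    lt_sub_comm]

lemma eq_zero_iff (hp : p ∈ Ioo (-1) 1) :
    logFailureRatio k p = 0 ↔ p = 1 - (1 - p ^ 2) ^ k := by
  simp only [le_antisymm_iff, ← not_lt, pos_iff hp, neg_iff hp]

lemma hasDerivAt (k : ℝ) (hp : p ∈ Ioo (-1) 1) :
    HasDerivAt (logFailureRatio k) (k / (1 + p) - (k - 1) / (1 - p)) p := by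
  have hplus : HasDerivAt (fun x ↦ Real.log (1 + x)) (1 / (1 + p)) p :=
    ((hasDerivAt_id p).const_add 1).log (by simp only [id]; linarith [hp.1])
  have hminus : HasDerivAt (fun x ↦ Real.log (1 - x)) (-1 / (1 - p)) p :=
    ((hasDerivAt_id p).const_sub 1).log (by simp only [id]; linarith [hp.2])
  have hsum : HasDerivAt (fun x ↦ k * Real.log (1 + x) + (k - 1) * Real.log (1 - x))
      (k / (1 + p) - (k - 1) / (1 - p)) p :=
    ((hplus.const_mul k).add (hminus.const_mul (k - 1))).congr_deriv (by ring)
  refine hsum.congr_of_eventuallyEq ?_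
  filter_upwards [isOpen_Ioo.mem_nhds hp] with x hx using eq_add_log k hx

lemma strictConcaveOn (hk : 1 ≤ k) : StrictConcaveOn ℝ (Ioo (-1) 1) (logFailureRatio k) := by
  refine StrictAntiOn.strictConcaveOn_of_deriv (convex_Ioo _ _)
    (fun p hp ↦ (hasDerivAt k hp).continuousAt.continuousWithinAt) ?_
  rw [interior_Ioo]
  intro x hx y hy hxy
  rw [(hasDerivAt k hx).deriv, (hasDerivAt k hy).deriv]
  have hx₁ : 0 < 1 + x := by linarith [hx.1]
  have hy₁ : 0 < 1 - y := by linarith [hy.2]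
  have hfst : k / (1 + y) < k / (1 + x) := by gcongr
  have hsnd : (k - 1) / (1 - x) ≤ (k - 1) / (1 - y) := by gcongr
  linarith

lemma eventually_pos_nhdsGT_zero (k : ℝ) : ∀ᶠ p in 𝓝[>] 0, 0 < logFailureRatio k p := by
  have hderiv : deriv (logFailureRatio k) 0 = 1 := by
    rw [(hasDerivAt k (by norm_num)).deriv]
    ring
  have hsign := eventually_nhdsWithin_sign_eq_of_deriv_pos (hderiv ▸ one_pos) (apply_zero k)
  filter_upwards [hsign.filter_mono nhdsWithin_le_nhds, self_mem_nhdsWithin] with p hp hp₀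
  rwa [sub_zero, sign_pos (mem_Ioi.1 hp₀), sign_eq_one_iff] at hp

lemma tendsto_atBot_nhdsLT_one (hk : 1 < k) :
    Tendsto (logFailureRatio k) (𝓝[<] 1) atBot := by
  have hplus : Tendsto (fun p : ℝ ↦ k * Real.log (1 + p)) (𝓝[<] 1) (𝓝 (k * Real.log (1 + 1))) :=
    (ContinuousAt.tendsto (by fun_prop (disch := norm_num))).mono_left nhdsWithin_le_nhds
  have hone_sub : Tendsto (fun p : ℝ ↦ 1 - p) (𝓝[<] 1) (𝓝[>] 0) := by
    refine tendsto_nhdsWithin_iff.2 ⟨?_, ?_⟩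
    · exact (Continuous.tendsto' (by fun_prop) _ _ (sub_self 1)).mono_left nhdsWithin_le_nhds
    · filter_upwards [self_mem_nhdsWithin] with p hp using sub_pos.2 (mem_Iio.1 hp)
  have hminus : Tendsto (fun p : ℝ ↦ (k - 1) * Real.log (1 - p)) (𝓝[<] 1) atBot :=
    (Real.tendsto_log_nhdsGT_zero.comp hone_sub).const_mul_atBot (sub_pos.2 hk)
  refine (hplus.add_atBot hminus).congr' ?_
  filter_upwards [Ioo_mem_nhdsLT (show (-1 : ℝ) < 1 by norm_num)] with p hp
    using (eq_add_log k hp).symm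

lemma exists_sign_change (hk : 1 < k) :
    ∃ p₀ ∈ Ioo (0 : ℝ) 1, logFailureRatio k p₀ = 0 ∧
      (∀ p ∈ Ioo 0 p₀, 0 < logFailureRatio k p) ∧ ∀ p ∈ Ioo p₀ 1, logFailureRatio k p < 0 := by
  have hconc : StrictConcaveOn ℝ (Ico 0 1) (logFailureRatio k) :=
    (strictConcaveOn hk.le).subset (Ico_subset_Ioo_left (by norm_num)) (convex_Ico 0 1)
  have hpos : ∃ p ∈ Ioo 0 1, 0 < logFailureRatio k p :=
    (Filter.Eventually.and (Ioo_mem_nhdsGT one_pos) (eventually_pos_nhdsGT_zero k)).exists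
  have hneg : ∃ p ∈ Ioo 0 1, logFailureRatio k p < 0 :=
    (Filter.Eventually.and (Ioo_mem_nhdsLT one_pos)
      ((tendsto_atBot_nhdsLT_one hk).eventually_lt_atBot 0)).exists
  exact exists_sign_change_of_strictConcaveOn hconc (apply_zero k).ge hpos hneg

end logFailureRatio

theorem direct_edge_vs_indirect_paths_general (k : ℝ) (hk : 1 < k) :
    ∃ p₀ ∈ Ioo (0 : ℝ) 1, p₀ = 1 - (1 - p₀ ^ 2) ^ k ∧
      (∀ p ∈ Ioo (0 : ℝ) 1, p = 1 - (1 - p ^ 2) ^ k → p = p₀) ∧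
      (∀ p ∈ Ioo (0 : ℝ) 1, p < p₀ → 1 - (1 - p ^ 2) ^ k < p) ∧
      (∀ p ∈ Ioo (0 : ℝ) 1, p₀ < p → p < 1 - (1 - p ^ 2) ^ k) := by
  obtain ⟨p₀, hp₀, hzero, hpos, hneg⟩ := logFailureRatio.exists_sign_change hk
  have hsub : Ioo (0 : ℝ) 1 ⊆ Ioo (-1) 1 := Ioo_subset_Ioo_left (by norm_num)
  have below : ∀ p ∈ Ioo (0 : ℝ) 1, p < p₀ → 1 - (1 - p ^ 2) ^ k < p := fun p hp hlt ↦
    (logFailureRatio.pos_iff (hsub hp)).1 (hpos p ⟨hp.1, hlt⟩)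
  have above : ∀ p ∈ Ioo (0 : ℝ) 1, p₀ < p → p < 1 - (1 - p ^ 2) ^ k := fun p hp hgt ↦
    (logFailureRatio.neg_iff (hsub hp)).1 (hneg p ⟨hgt, hp.2⟩)
  refine ⟨p₀, hp₀, (logFailureRatio.eq_zero_iff (hsub hp₀)).1 hzero, ?_, below, above⟩
  intro p hp heq
  rcases lt_trichotomy p p₀ with hlt | rfl | hgt
  · exact absurd heq (below p hp hlt).ne'
  · rfl
  · exact absurd heq (above p hp hgt).ne

/-- For every integer `k ≥ 2` there is a unique `p₀ ∈ (0,1)` with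
`p₀ = 1 − (1 − p₀²)^k`; moreover for `p ∈ (0,1)` below `p₀` one has
`p > 1 − (1 − p²)^k`, and above `p₀` one has `p < 1 − (1 − p²)^k`. -/
theorem direct_edge_vs_indirect_paths (k : ℕ) (hk : 2 ≤ k) :
    ∃ p₀ ∈ Set.Ioo (0 : ℝ) 1, p₀ = 1 - (1 - p₀ ^ 2) ^ k ∧
      (∀ p ∈ Set.Ioo (0 : ℝ) 1, p = 1 - (1 - p ^ 2) ^ k → p = p₀) ∧
      (∀ p ∈ Set.Ioo (0 : ℝ) 1, p < p₀ → 1 - (1 - p ^ 2) ^ k < p) ∧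
      (∀ p ∈ Set.Ioo (0 : ℝ) 1, p₀ < p → p < 1 - (1 - p ^ 2) ^ k) := by
  simpa only [Real.rpow_natCast] using
    direct_edge_vs_indirect_paths_general k (Nat.one_lt_cast.2 hk)
end
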